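/- Let f be a non-nilpotent linear operator on a nonzero finite-dimensional complex vector space V, let ρ(f) be its spectral radius (necessarily ρ(f) > 0), and let ‖·‖ be any norm on the finite-dimensional vector space End(V) of linear operators on V. Then the limit s(f) := lim_{n→∞} (log ‖f^n‖ − n·log ρ(f)) / log n exists; moreover s(f) is a nonnegative integer, and its value is independent of the choice of the norm ‖·‖ on End(V). -/

import Mathlib

/-- The spectral radius of an endomorphism of a finite-dimensional complex vector
space: the maximal absolute value of the roots in `ℂ` of its characteristic
polynomial. -/
noncomputable def specRadEnd {V : Type*} [AddCommGroup V] [Module ℂ V]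
    [FiniteDimensional ℂ V] (f : Module.End ℂ V) : ℝ :=
  ((((LinearMap.charpoly f).roots.map fun z => ‖z‖₊).sup : NNReal) : ℝ)

/-!
For each eigenvalue `μ`, let `m(μ)` be the exponent at which the generalized eigenspaces of `μ`
stabilize, i.e. the size of its largest Jordan block. Expanding `f ^ n = (μ + (f - μ)) ^ n` shows
that on a vector killed by `(f - μ) ^ (k + 1)` but not by `(f - μ) ^ k` the orbit of `f` grows
exactly like `n ^ k * |μ| ^ n`. Let `μ` maximize `(|μ|, m(μ))` lexicographically. Since generalized
eigenvectors span, every orbit is `O(n ^ (m(μ) - 1) * |μ| ^ n)`, and some orbit attains this rate;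
cancellation between different eigenvalues is not an issue, since the lower bound is witnessed by a
single generalized eigenvector. Hence `‖f ^ n‖ = Θ(n ^ (m(μ) - 1) * ρ(f) ^ n)` for every norm, and
taking logarithms gives `s(f) = m(μ) - 1`.
-/

open Filter Asymptotics Topology Module Module.End

section Algebra

theorem pow_eq_sum_smul_sub_smul_one_pow {R A : Type*} [CommRing R] [Ring A] [Algebra R A]
    (a : A) (μ : R) (n : ℕ) :
    a ^ n = ∑ j ∈ Finset.range (n + 1),
      ((n.choose j : R) * μ ^ (n - j)) • (a - μ • (1 : A)) ^ j := by
  have hcomm : Commute (a - μ • (1 : A)) (μ • (1 : A)) := (Commute.one_right _).smul_right μ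
  conv_lhs => rw [← sub_add_cancel a (μ • (1 : A)), hcomm.add_pow]
  refine Finset.sum_congr rfl fun j _ => ?_
  rw [smul_pow, one_pow, mul_smul_comm, mul_one, smul_mul_assoc, ← nsmul_eq_mul', mul_comm,
    mul_smul, Nat.cast_smul_eq_nsmul]

variable {R M : Type*} [CommRing R] [AddCommGroup M] [Module R M] {f : End R M} {μ : R}

theorem sub_smul_one_pow_apply_eq_zero {k j : ℕ} {v : M} (hv : v ∈ f.genEigenspace μ k)
    (hkj : k ≤ j) : ((f - μ • (1 : End R M)) ^ j) v = 0 :=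
  mem_genEigenspace_nat.1 ((f.genEigenspace μ).monotone (Nat.cast_le.2 hkj) hv)

theorem pow_apply_eq_sum_of_mem_genEigenspace {k : ℕ} {v : M} (hv : v ∈ f.genEigenspace μ k)
    (n : ℕ) :
    (f ^ n) v = ∑ j ∈ Finset.range k,
      ((n.choose j : R) * μ ^ (n - j)) • ((f - μ • (1 : End R M)) ^ j) v := by
  rw [pow_eq_sum_smul_sub_smul_one_pow f μ n, LinearMap.sum_apply]
  refine Finset.sum_congr_of_eq_on_inter (fun j _ hj => ?_) (fun j _ hj => ?_) fun _ _ _ => rfl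
  · rw [LinearMap.smul_apply,
      sub_smul_one_pow_apply_eq_zero hv (by simpa only [Finset.mem_range, not_lt] using hj),
      smul_zero]
  · rw [Nat.choose_eq_zero_of_lt (by rw [Finset.mem_range] at hj; omega), Nat.cast_zero, zero_mul,
      zero_smul]

theorem genEigenspace_lt_maxGenEigenspace {k : ℕ} (hk : k < f.maxGenEigenspaceIndex μ) :
    f.genEigenspace μ k < f.maxGenEigenspace μ := by
  refine lt_of_le_not_ge ((f.genEigenspace μ).monotone le_top) fun hle => hk.not_ge ?_
  refine Nat.sInf_le fun m hkm => le_antisymm ?_ ?_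
  · exact (f.genEigenspace μ).monotone (Nat.cast_le.2 hkm)
  · exact ((f.genEigenspace μ).monotone le_top).trans hle

theorem maxGenEigenspaceIndex_pos [IsNoetherian R M] (hμ : f.HasEigenvalue μ) :
    0 < f.maxGenEigenspaceIndex μ := by
  refine Nat.pos_of_ne_zero fun h0 => hμ (le_bot_iff.1 ?_)
  have hle : f.eigenspace μ ≤ f.maxGenEigenspace μ := eigenspace_le_maxGenEigenspace
  rwa [maxGenEigenspace_eq, h0, Nat.cast_zero, genEigenspace_zero] at hle

theorem exists_hasEigenvalue_ne_zero_of_not_isNilpotent {K V : Type*} [Field K] [IsAlgClosed K]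
    [AddCommGroup V] [Module K V] [FiniteDimensional K V] {f : End K V} (hf : ¬ IsNilpotent f) :
    ∃ μ, f.HasEigenvalue μ ∧ μ ≠ 0 := by
  by_contra! hzero
  have hroots : ∀ z ∈ f.charpoly.roots, z = 0 := fun z hz =>
    hzero z ((hasEigenvalue_iff_isRoot_charpoly f z).2 (Polynomial.isRoot_of_mem_roots hz))
  have hprod := (IsAlgClosed.splits f.charpoly).eq_prod_roots_of_monic f.charpoly_monic
  rw [Multiset.eq_replicate_card.2 hroots, Multiset.map_replicate, Multiset.prod_replicate,
    Polynomial.C_0, sub_zero] at hprod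
  refine hf ⟨f.charpoly.roots.card, ?_⟩
  rw [← Polynomial.aeval_X_pow (R := K) f, ← hprod, f.aeval_self_charpoly]

end Algebra

section OrbitGrowth

theorem pow_sub_isTheta {𝕜 : Type*} [NormedField 𝕜] (μ : 𝕜) (j : ℕ) :
    (fun n : ℕ => μ ^ (n - j)) =Θ[atTop] fun n : ℕ => ‖μ‖ ^ n := by
  rcases eq_or_ne μ 0 with rfl | hμ
  · have hleft : (fun n : ℕ => (0 : 𝕜) ^ (n - j)) =ᶠ[atTop] fun _ => 0 := by
      filter_upwards [eventually_gt_atTop j] with n hn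
      exact zero_pow (Nat.sub_pos_of_lt hn).ne'
    refine hleft.trans_isTheta (isTheta_zero_left.2 ?_)
    filter_upwards [eventually_ne_atTop 0] with n hn
    rw [norm_zero, zero_pow hn, Pi.zero_apply]
  · have hshift : (fun n : ℕ => μ ^ (n - j)) =ᶠ[atTop] fun n => (μ ^ j)⁻¹ * μ ^ n := by
      filter_upwards [eventually_ge_atTop j] with n hn
      rw [pow_sub₀ μ hμ hn, mul_comm]
    refine hshift.trans_isTheta (IsTheta.const_mul_left (inv_ne_zero (pow_ne_zero j hμ)) ?_)
    simp_rw [← norm_pow]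
    exact (isTheta_refl _ _).norm_right

variable {𝕜 V : Type*} [RCLike 𝕜] [NormedAddCommGroup V] [NormedSpace 𝕜 V] {f : End 𝕜 V} {μ : 𝕜}

theorem choose_mul_pow_sub_isTheta (μ : 𝕜) (j : ℕ) :
    (fun n : ℕ => (n.choose j : 𝕜) * μ ^ (n - j)) =Θ[atTop]
      fun n : ℕ => (n : ℝ) ^ j * ‖μ‖ ^ n := by
  refine IsTheta.mul ?_ (pow_sub_isTheta μ j)
  rw [← isTheta_norm_left]
  simpa only [RCLike.norm_natCast] using isTheta_choose j

theorem choose_mul_pow_sub_smul_isLittleO (μ : 𝕜) {j k : ℕ} (hjk : j < k) (w : V) :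
    (fun n : ℕ => ((n.choose j : 𝕜) * μ ^ (n - j)) • w) =o[atTop]
      fun n : ℕ => (n : ℝ) ^ k * ‖μ‖ ^ n := by
  have hpow : (fun n : ℕ => (n : ℝ) ^ j) =o[atTop] fun n : ℕ => (n : ℝ) ^ k :=
    (isLittleO_pow_pow_atTop_of_lt hjk).natCast_atTop
  have hcoeff := (choose_mul_pow_sub_isTheta μ j).trans_isLittleO
    (hpow.mul_isBigO (isBigO_refl (fun n : ℕ => ‖μ‖ ^ n) atTop))
  simpa only [smul_eq_mul, mul_one] using
    hcoeff.smul_isBigO (isBigO_const_const w (one_ne_zero (α := ℝ)) atTop)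

theorem pow_apply_isTheta_of_mem_genEigenspace {k : ℕ} {v : V}
    (hv : v ∈ f.genEigenspace μ (k + 1 : ℕ)) (hv' : v ∉ f.genEigenspace μ k) :
    (fun n : ℕ => (f ^ n) v) =Θ[atTop] fun n : ℕ => (n : ℝ) ^ k * ‖μ‖ ^ n := by
  have hlead : ((f - μ • (1 : End 𝕜 V)) ^ k) v ≠ 0 := fun h0 => hv' (mem_genEigenspace_nat.2 h0)
  simp_rw [pow_apply_eq_sum_of_mem_genEigenspace hv, Finset.sum_range_succ,
    add_comm (Finset.sum _ _)]
  refine IsTheta.add_isLittleO ?_ <| IsLittleO.fun_sum fun j hj =>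
    choose_mul_pow_sub_smul_isLittleO μ (Finset.mem_range.1 hj) _
  simpa only [smul_eq_mul, mul_one] using
    (choose_mul_pow_sub_isTheta μ k).smul (isTheta_const_const hlead (one_ne_zero (α := ℝ)))

-- At `k = 0` the exponent `k - 1` is truncated, but then `v = 0`.
theorem pow_apply_isBigO_of_mem_genEigenspace {k : ℕ} {v : V} (hv : v ∈ f.genEigenspace μ k) :
    (fun n : ℕ => (f ^ n) v) =O[atTop] fun n : ℕ => (n : ℝ) ^ (k - 1) * ‖μ‖ ^ n := by
  simp_rw [pow_apply_eq_sum_of_mem_genEigenspace hv]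
  refine IsBigO.fun_sum fun j hj => ?_
  rcases (Nat.le_sub_one_of_lt (Finset.mem_range.1 hj)).eq_or_lt with rfl | hlt
  · simpa only [smul_eq_mul, mul_one] using (choose_mul_pow_sub_isTheta μ _).isBigO.smul
      (isBigO_const_const _ (one_ne_zero (α := ℝ)) atTop)
  · exact (choose_mul_pow_sub_smul_isLittleO μ hlt _).isBigO

theorem natCast_pow_mul_pow_isBigO {r R : ℝ} (hr : 0 ≤ r) {j k : ℕ}
    (h : r < R ∨ r = R ∧ j ≤ k) :
    (fun n : ℕ => (n : ℝ) ^ j * r ^ n) =O[atTop] fun n : ℕ => (n : ℝ) ^ k * R ^ n := by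
  have hpow {i : ℕ} (hik : i ≤ k) : (fun n : ℕ => (n : ℝ) ^ i) =O[atTop] fun n => (n : ℝ) ^ k := by
    rcases hik.eq_or_lt with rfl | hlt
    · exact isBigO_refl _ _
    · exact (isLittleO_pow_pow_atTop_of_lt hlt).isBigO.natCast_atTop
  rcases h with hlt | ⟨rfl, hjk⟩
  · have hgeom : (fun n : ℕ => (n : ℝ) ^ j * r ^ n) =O[atTop] fun n => R ^ n :=
      (isLittleO_pow_const_mul_const_pow_const_pow_of_norm_lt j
        (by rwa [Real.norm_of_nonneg hr])).isBigO
    have hone : (fun n : ℕ => R ^ n) =O[atTop] fun n => (n : ℝ) ^ k * R ^ n := by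
      simpa only [pow_zero, one_mul] using
        (hpow k.zero_le).mul (isBigO_refl (fun n => R ^ n) atTop)
    exact hgeom.trans hone
  · exact (hpow hjk).mul (isBigO_refl _ _)

/-- The vectors whose orbit under `f` is `O(g n)`; being a submodule, it is everything as soon as it
contains the generalized eigenspaces. -/
def orbitGrowthSubmodule (f : End 𝕜 V) (g : ℕ → ℝ) : Submodule 𝕜 V where
  carrier := {v | (fun n : ℕ => (f ^ n) v) =O[atTop] g}
  zero_mem' := by simpa only [Set.mem_ofPred_eq, map_zero] using isBigO_zero g atTop
  add_mem' hv hw := by simpa only [Set.mem_ofPred_eq, map_add] using hv.add hw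
  smul_mem' c _ hv := by
    simpa only [Set.mem_ofPred_eq, map_smul] using! hv.const_smul_left c

end OrbitGrowth

section Norms

variable {α 𝕜 E F G : Type*} [NontriviallyNormedField 𝕜] [CompleteSpace 𝕜] [NormedAddCommGroup F]
  [NormedSpace 𝕜 F] {l : Filter α}

theorem isBigO_of_forall_apply_isBigO [NormedAddCommGroup E] [NormedSpace 𝕜 E]
    [FiniteDimensional 𝕜 E] [SeminormedAddCommGroup G] {T : α → E →L[𝕜] F} {g : α → G}
    (h : ∀ v, (fun a => T a v) =O[l] g) : T =O[l] g := by
  let b := finBasis 𝕜 E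
  obtain ⟨C, -, hC⟩ := b.exists_opNorm_le (F := F)
  have hT : T =O[l] fun a i => T a (b i) :=
    IsBigO.of_bound C (Eventually.of_forall fun a =>
      hC (norm_nonneg _) (norm_le_pi_norm fun i => T a (b i)))
  exact hT.trans (isBigO_pi.2 fun i => h (b i))

theorem isTheta_linearEquiv_of_seminorm [AddCommGroup E] [Module 𝕜 E] [FiniteDimensional 𝕜 E]
    (p : Seminorm 𝕜 E) (hp : ∀ x, p x = 0 → x = 0) (e : E ≃ₗ[𝕜] F) (u : α → E) :
    (fun a => p (u a)) =Θ[l] fun a => e (u a) := by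
  let _ : Norm E := ⟨p⟩
  have core : NormedSpace.Core 𝕜 E :=
    { norm_nonneg := apply_nonneg p
      norm_smul := map_smul_eq_mul p
      norm_triangle := map_add_le_add p
      norm_eq_zero_iff := fun x => ⟨hp x, fun hx => hx ▸ map_zero p⟩ }
  let _ : NormedAddCommGroup E := NormedAddCommGroup.ofCore core
  let _ : NormedSpace 𝕜 E := NormedSpace.ofCore core
  have hu : u =Θ[l] fun a => e (u a) :=
    ⟨e.toContinuousLinearEquiv.isBigO_comp_rev u l, e.toContinuousLinearEquiv.isBigO_comp u l⟩
  exact hu.norm_left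

end Norms

section DominantEigenvalue

/-- An eigenvalue `μ` of `f` for which `(‖μ‖, m(μ))` is lexicographically maximal, `m(μ)` being the
exponent at which the generalized eigenspaces of `μ` stabilize (the size of the largest Jordan
block of `μ`). It governs the growth of the powers of `f`. -/
structure IsDominantEigenvalue {𝕜 V : Type*} [NormedField 𝕜] [AddCommGroup V] [Module 𝕜 V]
    (f : End 𝕜 V) (μ : 𝕜) : Prop where
  hasEigenvalue : f.HasEigenvalue μ
  norm_lt_or_index_le : ∀ ν, f.HasEigenvalue ν → ‖ν‖ < ‖μ‖ ∨
    ‖ν‖ = ‖μ‖ ∧ f.maxGenEigenspaceIndex ν ≤ f.maxGenEigenspaceIndex μ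

theorem exists_isDominantEigenvalue {𝕜 V : Type*} [NormedField 𝕜] [IsAlgClosed 𝕜] [AddCommGroup V]
    [Module 𝕜 V] [FiniteDimensional 𝕜 V] [Nontrivial V] (f : End 𝕜 V) :
    ∃ μ, IsDominantEigenvalue f μ := by
  obtain ⟨μ, hμ, hmax⟩ := Set.exists_max_image {ν | f.HasEigenvalue ν}
    (fun ν => toLex (‖ν‖, f.maxGenEigenspaceIndex ν)) f.finite_hasEigenvalue (exists_eigenvalue f)
  exact ⟨μ, hμ, fun ν hν => Prod.Lex.le_iff.1 (hmax ν hν)⟩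

namespace IsDominantEigenvalue

theorem norm_le {𝕜 V : Type*} [NormedField 𝕜] [AddCommGroup V] [Module 𝕜 V] {f : End 𝕜 V} {μ ν : 𝕜}
    (h : IsDominantEigenvalue f μ) (hν : f.HasEigenvalue ν) : ‖ν‖ ≤ ‖μ‖ :=
  (h.norm_lt_or_index_le ν hν).elim le_of_lt fun heq => heq.1.le

theorem specRadEnd_eq_norm {V : Type*} [AddCommGroup V] [Module ℂ V] [FiniteDimensional ℂ V]
    {f : End ℂ V} {μ : ℂ} (h : IsDominantEigenvalue f μ) : specRadEnd f = ‖μ‖ := by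
  have hroots {z : ℂ} : z ∈ f.charpoly.roots ↔ f.HasEigenvalue z := by
    rw [Polynomial.mem_roots f.charpoly_monic.ne_zero, hasEigenvalue_iff_isRoot_charpoly]
  refine congrArg NNReal.toReal (a₂ := ‖μ‖₊) (le_antisymm (Multiset.sup_le.2 fun r hr => ?_) ?_)
  · obtain ⟨z, hz, rfl⟩ := Multiset.mem_map.1 hr
    exact h.norm_le (hroots.1 hz)
  · exact Multiset.le_sup (Multiset.mem_map_of_mem _ (hroots.2 h.hasEigenvalue))

variable {𝕜 V : Type*} [RCLike 𝕜] [NormedAddCommGroup V] [NormedSpace 𝕜 V]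
  [FiniteDimensional 𝕜 V] {f : End 𝕜 V} {μ : 𝕜}

theorem exists_pow_apply_isTheta (h : IsDominantEigenvalue f μ) :
    ∃ v, (fun n : ℕ => (f ^ n) v) =Θ[atTop]
      fun n : ℕ => (n : ℝ) ^ (f.maxGenEigenspaceIndex μ - 1) * ‖μ‖ ^ n := by
  obtain ⟨k, hk⟩ := Nat.exists_eq_add_one.2 (maxGenEigenspaceIndex_pos h.hasEigenvalue)
  obtain ⟨v, hv, hv'⟩ := SetLike.exists_of_lt
    (genEigenspace_lt_maxGenEigenspace (f := f) (μ := μ) (k := k) (by omega))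
  rw [maxGenEigenspace_eq, hk] at hv
  rw [hk, Nat.add_sub_cancel]
  exact ⟨v, pow_apply_isTheta_of_mem_genEigenspace hv hv'⟩

theorem pow_apply_isBigO (h : IsDominantEigenvalue f μ) (hf : ⨆ ν, f.maxGenEigenspace ν = ⊤)
    (v : V) :
    (fun n : ℕ => (f ^ n) v) =O[atTop]
      fun n : ℕ => (n : ℝ) ^ (f.maxGenEigenspaceIndex μ - 1) * ‖μ‖ ^ n := by
  suffices hle : ∀ ν, f.maxGenEigenspace ν ≤ orbitGrowthSubmodule f
      fun n : ℕ => (n : ℝ) ^ (f.maxGenEigenspaceIndex μ - 1) * ‖μ‖ ^ n from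
    iSup_le hle (hf ▸ Submodule.mem_top : v ∈ ⨆ ν, f.maxGenEigenspace ν)
  intro ν
  by_cases hν : f.HasEigenvalue ν
  · intro w hw
    rw [maxGenEigenspace_eq] at hw
    refine (pow_apply_isBigO_of_mem_genEigenspace hw).trans
      (natCast_pow_mul_pow_isBigO (norm_nonneg ν) ?_)
    exact (h.norm_lt_or_index_le ν hν).imp_right (And.imp_right (Nat.sub_le_sub_right · 1))
  · have hbot : f.maxGenEigenspace ν = ⊥ := by
      rwa [HasEigenvalue, ← hasUnifEigenvalue_iff_hasUnifEigenvalue_one ENat.top_pos,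
        HasUnifEigenvalue, not_not] at hν
    exact hbot ▸ bot_le

theorem toContinuousLinearMap_pow_isTheta (h : IsDominantEigenvalue f μ)
    (hf : ⨆ ν, f.maxGenEigenspace ν = ⊤) :
    (fun n : ℕ => LinearMap.toContinuousLinearMap (f ^ n)) =Θ[atTop]
      fun n : ℕ => (n : ℝ) ^ (f.maxGenEigenspaceIndex μ - 1) * ‖μ‖ ^ n := by
  obtain ⟨v, hv⟩ := h.exists_pow_apply_isTheta
  refine ⟨isBigO_of_forall_apply_isBigO (h.pow_apply_isBigO hf), hv.symm.isBigO.trans ?_⟩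
  exact (ContinuousLinearMap.apply 𝕜 V v).isBigO_comp
    (fun n => LinearMap.toContinuousLinearMap (f ^ n)) atTop

end IsDominantEigenvalue

end DominantEigenvalue

section LogGrowth

theorem log_sub_log_le_of_le_mul {x y C : ℝ} (hx : 0 < x) (hy : 0 < y) (h : x ≤ C * y) :
    Real.log x - Real.log y ≤ Real.log C := by
  rw [← Real.log_div hx.ne' hy.ne']
  exact Real.log_le_log (div_pos hx hy) ((div_le_iff₀ hy).2 h)

theorem log_norm_sub_log_norm_isBigO_one_of_isTheta {α E F : Type*} [NormedAddCommGroup E]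
    [NormedAddCommGroup F] {l : Filter α} {u : α → E} {v : α → F} (h : u =Θ[l] v) :
    (fun x => Real.log ‖u x‖ - Real.log ‖v x‖) =O[l] fun _ => (1 : ℝ) := by
  obtain ⟨C, hC⟩ := h.isBigO.bound
  obtain ⟨D, hD⟩ := h.symm.isBigO.bound
  refine IsBigO.of_bound (max |Real.log C| |Real.log D|) ?_
  filter_upwards [hC, hD, h.eq_zero_iff] with x hxC hxD hzero
  by_cases hux : u x = 0
  · rw [hux, hzero.1 hux, norm_zero, norm_zero, sub_self, norm_zero]
    positivity
  · have hu : 0 < ‖u x‖ := norm_pos_iff.2 hux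
    have hv : 0 < ‖v x‖ := norm_pos_iff.2 (mt hzero.2 hux)
    rw [norm_one, mul_one, Real.norm_eq_abs, abs_le', neg_sub]
    exact ⟨le_max_of_le_left ((log_sub_log_le_of_le_mul hu hv hxC).trans (le_abs_self _)),
      le_max_of_le_right ((log_sub_log_le_of_le_mul hv hu hxD).trans (le_abs_self _))⟩

theorem tendsto_log_sub_mul_log_div_log_of_isTheta {a : ℕ → ℝ} {r s : ℝ} (hr : r ≠ 0)
    (h : a =Θ[atTop] fun n : ℕ => (n : ℝ) ^ s * r ^ n) :
    Tendsto (fun n : ℕ => (Real.log (a n) - n * Real.log r) / Real.log n) atTop (𝓝 s) := by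
  have hlog : Tendsto (fun n : ℕ => Real.log n) atTop atTop :=
    Real.tendsto_log_atTop.comp tendsto_natCast_atTop_atTop
  have hbdd : (fun n : ℕ => Real.log (a n) - Real.log ((n : ℝ) ^ s * r ^ n)) =O[atTop]
      fun _ => (1 : ℝ) := by
    simpa only [Real.norm_eq_abs, Real.log_abs] using log_norm_sub_log_norm_isBigO_one_of_isTheta h
  have hlim : Tendsto (fun n : ℕ =>
      (Real.log (a n) - Real.log ((n : ℝ) ^ s * r ^ n)) / Real.log n) atTop (𝓝 0) :=
    (hbdd.trans_isLittleO Real.isLittleO_const_log_atTop.natCast_atTop).tendsto_div_nhds_zero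
  refine Tendsto.congr' ?_ (zero_add s ▸ hlim.add_const s)
  filter_upwards [eventually_gt_atTop 0, hlog.eventually_ne_atTop 0] with n hn hlogn
  have hn' : (0 : ℝ) < n := Nat.cast_pos.2 hn
  rw [Real.log_mul (Real.rpow_pos_of_pos hn' s).ne' (pow_ne_zero n hr), Real.log_rpow hn',
    Real.log_pow]
  field_simp
  ring

end LogGrowth

/-- For a non-nilpotent endomorphism `f` of a nonzero finite-dimensional complex
vector space, the polynomial growth rate
`s(f) = lim_n (log ‖f^n‖ - n·log ρ(f)) / log n` exists, is a nonnegative integer,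
and is independent of the choice of norm on `End(V)`. -/
theorem polynomialGrowthRate_exists_nat_and_norm_independent
    (V : Type*) [AddCommGroup V] [Module ℂ V] [FiniteDimensional ℂ V]
    [Nontrivial V] (f : Module.End ℂ V) (hf : ¬ IsNilpotent f) :
    ∃ s : ℕ, ∀ N : Module.End ℂ V → ℝ,
      (∀ g, 0 ≤ N g) →
      (∀ g, N g = 0 ↔ g = 0) →
      (∀ (c : ℂ) (g : Module.End ℂ V), N (c • g) = ‖c‖ * N g) →
      (∀ g h : Module.End ℂ V, N (g + h) ≤ N g + N h) →
      Filter.Tendsto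
        (fun n : ℕ =>
          (Real.log (N (f ^ n)) - n * Real.log (specRadEnd f)) / Real.log n)
        Filter.atTop (nhds (s : ℝ)) := by
  let basis := finBasis ℂ V
  let _ : NormedAddCommGroup V :=
    NormedAddCommGroup.induced V _ basis.equivFun basis.equivFun.injective
  let _ : NormedSpace ℂ V := NormedSpace.induced ℂ V _ basis.equivFun
  obtain ⟨μ, hμ⟩ := exists_isDominantEigenvalue f
  have hρ : specRadEnd f ≠ 0 := by
    obtain ⟨ν, hν, hν0⟩ := exists_hasEigenvalue_ne_zero_of_not_isNilpotent hf
    exact ((norm_pos_iff.2 hν0).trans_le (hμ.specRadEnd_eq_norm ▸ hμ.norm_le hν)).ne'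
  refine ⟨f.maxGenEigenspaceIndex μ - 1, fun N _ hzero hsmul hadd => ?_⟩
  have hN : (fun n => N (f ^ n)) =Θ[atTop] fun n => LinearMap.toContinuousLinearMap (f ^ n) :=
    isTheta_linearEquiv_of_seminorm (Seminorm.of N hadd hsmul) (fun g => (hzero g).1)
      LinearMap.toContinuousLinearMap _
  have hpow := hμ.toContinuousLinearMap_pow_isTheta (iSup_maxGenEigenspace_eq_top f)
  refine tendsto_log_sub_mul_log_div_log_of_isTheta hρ ?_
  simpa only [Real.rpow_natCast, hμ.specRadEnd_eq_norm] using hN.trans hpow
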